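/- Fix n ≥ 1, T > 0, β > 0, κ > 0, I₀ ∈ (0,1), θ ∈ (0,1] and constants C₁, C₂ > 0. Suppose that for each t ∈ (0,T], p_t: ℝⁿ → [0,∞) is a measurable probability density (∫_{ℝⁿ} p_t(x) dx = 1) satisfying: (i) |p_t(x+h) − p_t(x)| ≤ C₁ ‖h‖^θ t^{−(θ+n)/β} for all x, h ∈ ℝⁿ, and (ii) ∫_{ℝⁿ} ‖x‖^{I₀} p_t(x) dx ≤ C₂ t^κ. Then for every τ ∈ (0,1] there is a constant C > 0 such that for all t ∈ (0,T] and all h ∈ ℝⁿ with ‖h‖ ≤ 1, ∫_{ℝⁿ} |p_t(x+h) − p_t(x)| dx ≤ C ( ‖h‖^θ t^{−((θ+n)/β + κ)} )^{τ I₀/(n+I₀)}. -/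

import Mathlib

open MeasureTheory Set

noncomputable section

/-- Pointwise bound on the increment of a nonnegative function `f`: a uniform bound `D` inside the
ball of radius `2 * R`, and a bound by the weighted function `‖y‖ ^ s * f y` outside of it. -/
lemma abs_translate_sub_le {E : Type*} [NormedAddCommGroup E] {f : E → ℝ}
    (hf : ∀ x, 0 ≤ f x) {h : E} {D R s : ℝ} (hs : 0 ≤ s) (hR : 0 < R) (hhR : ‖h‖ ≤ R)
    (hD : ∀ x, |f (x + h) - f x| ≤ D) (x : E) :
    |f (x + h) - f x| ≤ (Metric.ball (0 : E) (2 * R)).indicator (fun _ => D) x +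
      R ^ (-s) * (‖x + h‖ ^ s * f (x + h) + ‖x‖ ^ s * f x) := by
  have hRs : 0 < R ^ (-s) := Real.rpow_pos_of_pos hR _
  have hw : ∀ y, 0 ≤ ‖y‖ ^ s * f y := fun y => mul_nonneg (by positivity) (hf y)
  by_cases hx : x ∈ Metric.ball (0 : E) (2 * R)
  · rw [indicator_of_mem hx]
    exact (hD x).trans (le_add_of_nonneg_right (mul_nonneg hRs.le (add_nonneg (hw _) (hw _))))
  · rw [indicator_of_notMem hx, zero_add]
    have htail : ∀ y, R ≤ ‖y‖ → f y ≤ R ^ (-s) * (‖y‖ ^ s * f y) := fun y hy => by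
      rw [← mul_assoc]
      refine le_mul_of_one_le_left (hf y) ?_
      rw [Real.rpow_neg hR.le, ← div_eq_inv_mul, one_le_div (by positivity)]
      exact Real.rpow_le_rpow hR.le hy hs
    have hxR : 2 * R ≤ ‖x‖ := by simpa using hx
    have hxh : ‖x‖ ≤ ‖x + h‖ + ‖h‖ := by simpa using norm_sub_le (x + h) h
    have h1 := htail (x + h) (by linarith)
    have h2 := htail x (by linarith)
    rw [mul_add, abs_le]
    constructor <;> linarith [hf x, hf (x + h)]

/-- The `L¹` modulus of continuity of a nonnegative integrable function, controlled by the sup norm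
of its increment and by a moment. -/
lemma integral_abs_translate_sub_le {n : ℕ} {f : EuclideanSpace ℝ (Fin n) → ℝ}
    (hf : ∀ x, 0 ≤ f x) (hfi : Integrable f) {h : EuclideanSpace ℝ (Fin n)} {D M R s : ℝ}
    (hs : 0 ≤ s) (hR : 0 < R) (hhR : ‖h‖ ≤ R) (hD : ∀ x, |f (x + h) - f x| ≤ D)
    (hwi : Integrable fun x => ‖x‖ ^ s * f x) (hM : ∫ x, ‖x‖ ^ s * f x ≤ M) :
    ∫ x, |f (x + h) - f x| ≤
      D * ((2 * R) ^ n * volume.real (Metric.ball (0 : EuclideanSpace ℝ (Fin n)) 1)) +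
        2 * M * R ^ (-s) := by
  have hball : Integrable
      ((Metric.ball (0 : EuclideanSpace ℝ (Fin n)) (2 * R)).indicator fun _ => D) :=
    (integrable_indicator_iff measurableSet_ball).2
      (integrableOn_const measure_ball_lt_top.ne)
  have hwih : Integrable fun x => ‖x + h‖ ^ s * f (x + h) := hwi.comp_add_right h
  have hsum : Integrable fun x => R ^ (-s) * (‖x + h‖ ^ s * f (x + h) + ‖x‖ ^ s * f x) :=
    (hwih.add hwi).const_mul _
  calc ∫ x, |f (x + h) - f x|
      ≤ ∫ x, ((Metric.ball (0 : EuclideanSpace ℝ (Fin n)) (2 * R)).indicator (fun _ => D) x +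
          R ^ (-s) * (‖x + h‖ ^ s * f (x + h) + ‖x‖ ^ s * f x)) :=
        integral_mono ((hfi.comp_add_right h).sub hfi).abs
          (hball.add hsum) (abs_translate_sub_le hf hs hR hhR hD)
    _ = D * ((2 * R) ^ n * volume.real (Metric.ball (0 : EuclideanSpace ℝ (Fin n)) 1)) +
          R ^ (-s) * (2 * ∫ x, ‖x‖ ^ s * f x) := by
        rw [integral_add hball hsum, integral_const_mul,
          integral_add hwih hwi, integral_add_right_eq_self (fun x => ‖x‖ ^ s * f x) h,
          integral_indicator_const _ measurableSet_ball, measureReal_def,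
          Measure.addHaar_ball_of_pos _ _ (by positivity), ENNReal.toReal_mul,
          ENNReal.toReal_ofReal (by positivity), finrank_euclideanSpace_fin, smul_eq_mul,
          measureReal_def]
        ring
    _ ≤ _ := by
        have := Real.rpow_pos_of_pos hR (-s)
        nlinarith

lemma integral_abs_translate_sub_le_two {n : ℕ} {f : EuclideanSpace ℝ (Fin n) → ℝ}
    (hf : ∀ x, 0 ≤ f x) (hfi : Integrable f) (hf1 : ∫ x, f x = 1)
    (h : EuclideanSpace ℝ (Fin n)) : ∫ x, |f (x + h) - f x| ≤ 2 := by
  have hfh : Integrable fun x => f (x + h) := hfi.comp_add_right h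
  calc ∫ x, |f (x + h) - f x| ≤ ∫ x, (f (x + h) + f x) := by
        refine integral_mono (hfh.sub hfi).abs (hfh.add hfi) fun x => ?_
        simp only [abs_le]
        constructor <;> linarith [hf x, hf (x + h)]
    _ = 2 := by
        rw [integral_add hfh hfi, integral_add_right_eq_self f h, hf1]
        norm_num

theorem stmt13 (n : ℕ) (hn : 1 ≤ n) (T β κ I₀ θ C₁ C₂ : ℝ)
    (hT : 0 < T) (hβ : 0 < β) (hκ : 0 < κ) (hI₀ : I₀ ∈ Set.Ioo (0 : ℝ) 1)
    (hθ : θ ∈ Set.Ioc (0 : ℝ) 1) (hC₁ : 0 < C₁) (hC₂ : 0 < C₂)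
    (p : ℝ → EuclideanSpace ℝ (Fin n) → ℝ)
    (hmeas : ∀ t ∈ Set.Ioc (0 : ℝ) T, Measurable (p t))
    (hnonneg : ∀ t ∈ Set.Ioc (0 : ℝ) T, ∀ x, 0 ≤ p t x)
    (hintble : ∀ t ∈ Set.Ioc (0 : ℝ) T, Integrable (p t))
    (hprob : ∀ t ∈ Set.Ioc (0 : ℝ) T, ∫ x, p t x = 1)
    (hsup : ∀ t ∈ Set.Ioc (0 : ℝ) T, ∀ x h : EuclideanSpace ℝ (Fin n),
      |p t (x + h) - p t x| ≤ C₁ * ‖h‖ ^ θ * t ^ (-((θ + n) / β)))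
    (hmom : ∀ t ∈ Set.Ioc (0 : ℝ) T,
      ∫⁻ x, ENNReal.ofReal (‖x‖ ^ I₀ * p t x) ≤ ENNReal.ofReal (C₂ * t ^ κ)) :
    ∀ τ : ℝ, τ ∈ Set.Ioc (0 : ℝ) 1 →
      ∃ C : ℝ, 0 < C ∧ ∀ t ∈ Set.Ioc (0 : ℝ) T, ∀ h : EuclideanSpace ℝ (Fin n), ‖h‖ ≤ 1 →
        ∫ x, |p t (x + h) - p t x| ≤
          C * (‖h‖ ^ θ * t ^ (-((θ + n) / β + κ))) ^ (τ * I₀ / (n + I₀)) := by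
  rintro τ ⟨hτ0, hτ1⟩
  have hI : 0 < I₀ := hI₀.1
  have hnI : 0 < (n : ℝ) + I₀ := by positivity
  set V := volume.real (Metric.ball (0 : EuclideanSpace ℝ (Fin n)) 1)
  have hV : 0 ≤ V := measureReal_nonneg
  set K := C₁ * T ^ κ * (2 ^ n * V) + 2 * (C₂ * T ^ κ) with hK
  have hK0 : 0 ≤ K := by positivity
  refine ⟨2 + K, by positivity, fun t ht h hh => ?_⟩
  have ht0 : 0 < t := ht.1
  set X := ‖h‖ ^ θ * t ^ (-((θ + n) / β + κ)) with hX
  have hX0 : 0 ≤ X := by positivity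
  rcases eq_or_ne h 0 with rfl | hh0
  · simp only [add_zero, sub_self, abs_zero, integral_zero]
    positivity
  have hXpos : 0 < X := by
    have := norm_pos_iff.2 hh0
    positivity
  rcases le_total 1 X with hX1 | hX1
  · have h1 : 1 ≤ X ^ (τ * I₀ / (n + I₀)) := Real.one_le_rpow hX1 (by positivity)
    nlinarith [integral_abs_translate_sub_le_two (hnonneg t ht) (hintble t ht) (hprob t ht) h]
  have hw0 : ∀ x, 0 ≤ ‖x‖ ^ I₀ * p t x := fun x => mul_nonneg (by positivity) (hnonneg t ht x)
  have hwm : AEStronglyMeasurable (fun x => ‖x‖ ^ I₀ * p t x) volume :=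
    ((measurable_norm.pow_const I₀).mul (hmeas t ht)).aestronglyMeasurable
  have hwi : Integrable fun x => ‖x‖ ^ I₀ * p t x :=
    (lintegral_ofReal_ne_top_iff_integrable hwm (ae_of_all _ hw0)).1
      ((hmom t ht).trans_lt ENNReal.ofReal_lt_top).ne
  have htT : t ^ κ ≤ T ^ κ := Real.rpow_le_rpow ht0.le ht.2 hκ.le
  have hM : ∫ x, ‖x‖ ^ I₀ * p t x ≤ C₂ * T ^ κ := by
    rw [integral_eq_lintegral_of_nonneg_ae (ae_of_all _ hw0) hwm]
    exact (ENNReal.toReal_le_of_le_ofReal (by positivity) (hmom t ht)).trans (by gcongr)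
  have hD : ∀ x, |p t (x + h) - p t x| ≤ C₁ * T ^ κ * X := fun x =>
    calc |p t (x + h) - p t x| ≤ C₁ * ‖h‖ ^ θ * t ^ (-((θ + n) / β)) := hsup t ht x h
      _ = C₁ * t ^ κ * X := by
        have : t ^ (-((θ + n) / β)) = t ^ κ * t ^ (-((θ + n) / β + κ)) := by
          rw [← Real.rpow_add ht0]
          ring_nf
        rw [this, hX]
        ring
      _ ≤ C₁ * T ^ κ * X := by gcongr
  set R := X ^ (-(1 / (n + I₀)))
  have hR : 1 ≤ R := Real.one_le_rpow_of_pos_of_le_one_of_nonpos hXpos hX1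
    (neg_nonpos.2 (by positivity))
  have hRI : R ^ (-I₀) = X ^ (I₀ / (n + I₀)) := by
    rw [← Real.rpow_mul hX0]
    ring_nf
  have hRn : X * R ^ n = X ^ (I₀ / (n + I₀)) := by
    rw [← Real.rpow_mul_natCast hX0, ← Real.rpow_one_add' hX0]
    · congr 1
      field_simp
      ring
    · have : 1 + -(1 / ((n : ℝ) + I₀)) * n = I₀ / (n + I₀) := by
        field_simp
        ring
      rw [this]
      positivity
  calc ∫ x, |p t (x + h) - p t x|
      ≤ C₁ * T ^ κ * X * ((2 * R) ^ n * V) + 2 * (C₂ * T ^ κ) * R ^ (-I₀) :=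
        integral_abs_translate_sub_le (hnonneg t ht) (hintble t ht) hI.le (by linarith)
          (hh.trans hR) hD hwi hM
    _ = C₁ * T ^ κ * (2 ^ n * V) * (X * R ^ n) + 2 * (C₂ * T ^ κ) * R ^ (-I₀) := by
        rw [mul_pow]
        ring
    _ = K * X ^ (I₀ / (n + I₀)) := by
        rw [hRn, hRI, hK]
        ring
    _ ≤ (2 + K) * X ^ (τ * I₀ / (n + I₀)) := by
        refine mul_le_mul (by linarith) ?_ (by positivity) (by positivity)
        refine Real.rpow_le_rpow_of_exponent_ge hXpos hX1 ?_
        gcongr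
        exact mul_le_of_le_one_left hI.le hτ1
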